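/- arXiv:2011.04551 — 5 statements merged into one kernel-verified Lean document; each statement's English description precedes it below -/
import Mathlib

section
/- For all natural numbers L ≤ R, the maximal aligned dyadic intervals contained in [L,R) are pairwise disjoint and their union equals [L,R). (In particular, the compact range of [L,R) is a partition of [L,R); it is empty when L = R.) -/
/-- An aligned dyadic interval of naturals: `[a·2^k, (a+1)·2^k)`. -/
def IsDyadic (I : Set ℕ) : Prop :=
  ∃ a k : ℕ, I = Set.Ico (a * 2 ^ k) ((a + 1) * 2 ^ k)

/-- The compact range of `[L, R)`: the set of maximal aligned dyadic intervals
contained in `[L, R)`. -/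
def CompactRange (L R : ℕ) : Set (Set ℕ) :=
  {I | IsDyadic I ∧ I ⊆ Set.Ico L R ∧
    ∀ J : Set ℕ, IsDyadic J → J ⊆ Set.Ico L R → I ⊆ J → I = J}

theorem mem_dyadic_iff (a k n : ℕ) :
    n ∈ Set.Ico (a * 2 ^ k) ((a + 1) * 2 ^ k) ↔ n / 2 ^ k = a := by
  have hp : 0 < 2 ^ k := by positivity
  rw [Set.mem_Ico, ← Nat.le_div_iff_mul_le hp, ← Nat.div_lt_iff_lt_mul hp]
  omega

theorem dyadic_nested (a b k l x : ℕ) (hkl : k ≤ l)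
    (hx : x ∈ Set.Ico (a * 2 ^ k) ((a + 1) * 2 ^ k))
    (hx' : x ∈ Set.Ico (b * 2 ^ l) ((b + 1) * 2 ^ l)) :
    Set.Ico (a * 2 ^ k) ((a + 1) * 2 ^ k) ⊆ Set.Ico (b * 2 ^ l) ((b + 1) * 2 ^ l) := by
  intro y hy
  rw [mem_dyadic_iff] at *
  obtain ⟨d, rfl⟩ := Nat.exists_eq_add_of_le hkl
  rw [pow_add, ← Nat.div_div_eq_div_mul] at *
  rw [hy, ← hx, hx']

theorem compactRange_pairwise_disjoint_sUnion (L R : ℕ) (h : L ≤ R) :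
    (CompactRange L R).Pairwise Disjoint ∧ ⋃₀ CompactRange L R = Set.Ico L R := by
  constructor
  · rintro I ⟨⟨a, k, rfl⟩, hIs, hIm⟩ J ⟨⟨b, l, rfl⟩, hJs, hJm⟩ hne
    rw [Set.disjoint_left]
    intro x hx hx'
    apply hne
    rcases le_total k l with hkl | hkl
    · exact hIm _ ⟨b, l, rfl⟩ hJs (dyadic_nested a b k l x hkl hx hx')
    · exact (hJm _ ⟨a, k, rfl⟩ hIs (dyadic_nested b a l k x hkl hx' hx)).symm
  · apply Set.Subset.antisymm
    · exact Set.sUnion_subset fun I hI => hI.2.1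
    · intro n hn
      have hfin : {I : Set ℕ | IsDyadic I ∧ I ⊆ Set.Ico L R}.Finite :=
        (Set.finite_Ico L R).finite_subsets.subset fun I hI => hI.2
      have h0 : Set.Ico (n * 2 ^ 0) ((n + 1) * 2 ^ 0) ∈
          {I : Set ℕ | IsDyadic I ∧ I ⊆ Set.Ico L R} := by
        refine ⟨⟨n, 0, rfl⟩, ?_⟩
        intro y hy
        simp only [Set.mem_Ico, pow_zero, mul_one] at *
        omega
      obtain ⟨M, hM, hmax⟩ := hfin.exists_le_maximal h0
      refine ⟨M, ⟨hmax.prop.1, hmax.prop.2, fun J hJ hJs hMJ => ?_⟩, hM ?_⟩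
      · exact Set.Subset.antisymm hMJ (hmax.le_of_ge ⟨hJ, hJs⟩ hMJ)
      · simp
end

section
/- For all natural numbers L ≤ R and every k ∈ ℕ, at most two of the maximal aligned dyadic intervals contained in [L,R) have length 2^k (one whose parent dyadic interval extends past L on the left, and one whose parent extends past R on the right). -/
/-- The middle one of three intervals of the same length inside `[L, R)` is not maximal. -/
theorem compactRange_middle {L R k a b c : ℕ} (hab : a < b) (hbc : b < c)
    (ha : Set.Ico (a * 2 ^ k) ((a + 1) * 2 ^ k) ∈ CompactRange L R)
    (hb : Set.Ico (b * 2 ^ k) ((b + 1) * 2 ^ k) ∈ CompactRange L R)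
    (hc : Set.Ico (c * 2 ^ k) ((c + 1) * 2 ^ k) ∈ CompactRange L R) : False := by
  have hp : 0 < 2 ^ k := by positivity
  have h1 : L ≤ a * 2 ^ k := (ha.2.1 (Set.mem_Ico.2 ⟨le_rfl, by nlinarith⟩)).1
  have h2 : (c + 1) * 2 ^ k ≤ R := by
    have hm : (c + 1) * 2 ^ k - 1 ∈ Set.Ico (c * 2 ^ k) ((c + 1) * 2 ^ k) :=
      ⟨by rw [add_mul]; omega, by rw [add_mul]; omega⟩
    have := (hc.2.1 hm).2
    omega
  have e1 : b / 2 * 2 ^ (k + 1) = (2 * (b / 2)) * 2 ^ k := by ring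
  have e2 : (b / 2 + 1) * 2 ^ (k + 1) = (2 * (b / 2) + 2) * 2 ^ k := by ring
  have l1 : a * 2 ^ k ≤ (2 * (b / 2)) * 2 ^ k := Nat.mul_le_mul_right _ (by omega)
  have l2 : (2 * (b / 2)) * 2 ^ k ≤ b * 2 ^ k := Nat.mul_le_mul_right _ (by omega)
  have l3 : (b + 1) * 2 ^ k ≤ (2 * (b / 2) + 2) * 2 ^ k := Nat.mul_le_mul_right _ (by omega)
  have l4 : (2 * (b / 2) + 2) * 2 ^ k ≤ (c + 1) * 2 ^ k := Nat.mul_le_mul_right _ (by omega)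
  have key := hb.2.2 (Set.Ico (b / 2 * 2 ^ (k + 1)) ((b / 2 + 1) * 2 ^ (k + 1)))
    ⟨b / 2, k + 1, rfl⟩
    (Set.Ico_subset_Ico (by omega) (by omega)) (Set.Ico_subset_Ico (by omega) (by omega))
  have hcard := congrArg Set.ncard key
  rw [e1, e2] at hcard
  simp only [← Finset.coe_Ico, Set.ncard_coe_finset, Nat.card_Ico, add_mul] at hcard
  omega

/-- At most two of the maximal aligned dyadic intervals in `[L, R)` have length `2^k`. -/
theorem compactRange_at_most_two_per_height (L R : ℕ) (h : L ≤ R) (k : ℕ) :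
    {I ∈ CompactRange L R | ∃ a : ℕ, I = Set.Ico (a * 2 ^ k) ((a + 1) * 2 ^ k)}.encard ≤ 2 := by
  by_contra hlt
  rw [not_le] at hlt
  have hle := Order.add_one_le_of_lt hlt
  rw [show (2 : ℕ∞) + 1 = 3 by norm_num] at hle
  obtain ⟨t, hts, ht⟩ := Set.exists_subset_encard_eq hle
  obtain ⟨A, B, C, hAB, hAC, hBC, rfl⟩ := Set.encard_eq_three.1 ht
  obtain ⟨hA, a, rfl⟩ := hts (show A ∈ _ by simp)
  obtain ⟨hB, b, rfl⟩ := hts (show B ∈ _ by simp)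
  obtain ⟨hC, c, rfl⟩ := hts (show C ∈ _ by simp)
  have n1 : a ≠ b := by rintro rfl; exact hAB rfl
  have n2 : a ≠ c := by rintro rfl; exact hAC rfl
  have n3 : b ≠ c := by rintro rfl; exact hBC rfl
  rcases lt_or_gt_of_ne n1 with h1 | h1 <;> rcases lt_or_gt_of_ne n2 with h2 | h2 <;>
    rcases lt_or_gt_of_ne n3 with h3 | h3
  · exact compactRange_middle h1 h3 hA hB hC
  · exact compactRange_middle h2 h3 hA hC hB
  · omega
  · exact compactRange_middle h2 h1 hC hA hB
  · exact compactRange_middle h1 h2 hB hA hC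
  · omega
  · exact compactRange_middle h3 h2 hB hC hA
  · exact compactRange_middle h3 h1 hC hB hA
end

section
/- For all natural numbers L < R, the number of maximal aligned dyadic intervals contained in [L,R) is at most 2·(⌊log₂(R−L)⌋ + 1). -/
/-- A maximal interval is not contained in its parent, if the parent is inside `[L, R)`. -/
theorem parent_not_sub (L R a k b : ℕ) (hb : 2 * b ≤ a) (ha : a ≤ 2 * b + 1)
    (hmax : ∀ J : Set ℕ, IsDyadic J → J ⊆ Set.Ico L R →
      Set.Ico (a * 2 ^ k) ((a + 1) * 2 ^ k) ⊆ J → Set.Ico (a * 2 ^ k) ((a + 1) * 2 ^ k) = J)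
    (h1 : L ≤ 2 * b * 2 ^ k) (h2 : (2 * b + 2) * 2 ^ k ≤ R) : False := by
  have hp : 0 < 2 ^ k := by positivity
  have e1 : b * 2 ^ (k + 1) = 2 * b * 2 ^ k := by ring
  have e2 : (b + 1) * 2 ^ (k + 1) = (2 * b + 2) * 2 ^ k := by ring
  have l1 : 2 * b * 2 ^ k ≤ a * 2 ^ k := Nat.mul_le_mul_right _ hb
  have l2 : (a + 1) * 2 ^ k ≤ (2 * b + 2) * 2 ^ k := Nat.mul_le_mul_right _ (by omega)
  have hJ := hmax (Set.Ico (2 * b * 2 ^ k) ((2 * b + 2) * 2 ^ k)) ⟨b, k + 1, by rw [e1, e2]⟩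
    (Set.Ico_subset_Ico h1 h2) (Set.Ico_subset_Ico l1 l2)
  have m1 : 2 * b * 2 ^ k ∈ Set.Ico (a * 2 ^ k) ((a + 1) * 2 ^ k) := by
    rw [hJ]; constructor <;> nlinarith
  have m2 : (2 * b + 1) * 2 ^ k ∈ Set.Ico (a * 2 ^ k) ((a + 1) * 2 ^ k) := by
    rw [hJ]; constructor <;> nlinarith
  have t1 := Nat.le_of_mul_le_mul_right m1.1 hp
  have t2 := Nat.lt_of_mul_lt_mul_right m2.2
  omega

/-- The compact range of `[L, R)` has at most `2·(⌊log₂(R−L)⌋ + 1)` elements. -/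
theorem compactRange_card_le (L R : ℕ) (h : L < R) :
    (CompactRange L R).encard ≤ ((2 * (Nat.log 2 (R - L) + 1) : ℕ) : ℕ∞) := by
  classical
  let f : ℕ × Bool → Set ℕ := fun p =>
    if p.2 then Set.Ico ((R / 2 ^ p.1 - 1) * 2 ^ p.1) ((R / 2 ^ p.1 - 1 + 1) * 2 ^ p.1)
    else Set.Ico ((L + 2 ^ p.1 - 1) / 2 ^ p.1 * 2 ^ p.1)
      (((L + 2 ^ p.1 - 1) / 2 ^ p.1 + 1) * 2 ^ p.1)
  let S : Finset (ℕ × Bool) := Finset.range (Nat.log 2 (R - L) + 1) ×ˢ Finset.univ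
  have hsub : CompactRange L R ⊆ ((S.image f : Finset (Set ℕ)) : Set (Set ℕ)) := by
    rintro I ⟨⟨a, k, rfl⟩, hI, hmax⟩
    have hp : 0 < 2 ^ k := by positivity
    have hlt : a * 2 ^ k < (a + 1) * 2 ^ k := by nlinarith
    obtain ⟨hL, hR⟩ := (Set.Ico_subset_Ico_iff hlt).1 hI
    have hk : k < Nat.log 2 (R - L) + 1 := by
      apply Nat.lt_succ_of_le
      apply Nat.le_log_of_pow_le (by norm_num)
      have : (a + 1) * 2 ^ k = a * 2 ^ k + 2 ^ k := by ring
      omega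
    rw [Finset.coe_image]
    rcases Nat.even_or_odd' a with ⟨b, rfl | rfl⟩
    · refine ⟨(k, true), by simp [S]; omega, ?_⟩
      have hlt : R < (2 * b + 1 + 1) * 2 ^ k := by
        by_contra hc
        exact parent_not_sub L R (2 * b) k b le_rfl (by omega) hmax hL (by push Not at hc; exact hc)
      have hq : R / 2 ^ k = 2 * b + 1 := Nat.div_eq_of_lt_le hR hlt
      simp [f, hq]
    · refine ⟨(k, false), by simp [S]; omega, ?_⟩
      have hlt : 2 * b * 2 ^ k < L := by
        by_contra hc
        exact parent_not_sub L R (2 * b + 1) k b (by omega) le_rfl hmax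
          (by push Not at hc; exact hc) hR
      have e1 : (2 * b + 1) * 2 ^ k = 2 * b * 2 ^ k + 2 ^ k := by ring
      have e2 : (2 * b + 1 + 1) * 2 ^ k = 2 * b * 2 ^ k + 2 ^ k + 2 ^ k := by ring
      have hq : (L + 2 ^ k - 1) / 2 ^ k = 2 * b + 1 :=
        Nat.div_eq_of_lt_le (by omega) (by omega)
      simp [f, hq]
  refine (Set.encard_le_encard hsub).trans ?_
  rw [Set.encard_coe_eq_coe_finsetCard]
  have hc : (S.image f).card ≤ 2 * (Nat.log 2 (R - L) + 1) := by
    refine Finset.card_image_le.trans ?_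
    simp [S, Finset.card_product]
    omega
  exact_mod_cast hc
end

section
/- For all natural numbers L ≤ R, every partition of the interval [L,R) into aligned dyadic intervals has at least as many parts as the compact range of [L,R); i.e., the compact range is a minimum-cardinality covering of [L,R) by disjoint aligned dyadic intervals. -/
theorem dyadic_nested_aux {a k b l x : ℕ} (hkl : k ≤ l)
    (h1 : x ∈ Set.Ico (a * 2 ^ k) ((a + 1) * 2 ^ k))
    (h2 : x ∈ Set.Ico (b * 2 ^ l) ((b + 1) * 2 ^ l)) :
    Set.Ico (a * 2 ^ k) ((a + 1) * 2 ^ k) ⊆ Set.Ico (b * 2 ^ l) ((b + 1) * 2 ^ l) := by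
  obtain ⟨d, rfl⟩ := Nat.exists_eq_add_of_le hkl
  rw [pow_add, mul_comm (2 ^ k), ← mul_assoc, ← mul_assoc] at *
  have hp : 0 < 2 ^ k := by positivity
  have e1 : b * 2 ^ d < a + 1 :=
    Nat.lt_of_mul_lt_mul_right (lt_of_le_of_lt h2.1 h1.2)
  have e2 : a < (b + 1) * 2 ^ d :=
    Nat.lt_of_mul_lt_mul_right (lt_of_le_of_lt h1.1 h2.2)
  exact Set.Ico_subset_Ico (Nat.mul_le_mul_right _ (by omega))
    (Nat.mul_le_mul_right _ (by omega))

theorem dyadic_nested_s3 {I J : Set ℕ} (hI : IsDyadic I) (hJ : IsDyadic J) {x : ℕ}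
    (h1 : x ∈ I) (h2 : x ∈ J) : I ⊆ J ∨ J ⊆ I := by
  obtain ⟨a, k, rfl⟩ := hI
  obtain ⟨b, l, rfl⟩ := hJ
  rcases le_total k l with h | h
  · exact Or.inl (dyadic_nested_aux h h1 h2)
  · exact Or.inr (dyadic_nested_aux h h2 h1)

theorem dyadic_nonempty {I : Set ℕ} (hI : IsDyadic I) : I.Nonempty := by
  obtain ⟨a, k, rfl⟩ := hI
  exact ⟨a * 2 ^ k, le_refl _, Nat.mul_lt_mul_of_pos_right (by omega) (by positivity)⟩

/-- The compact range is a minimum-cardinality partition of `[L, R)` into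
aligned dyadic intervals. -/
theorem compactRange_minimal (L R : ℕ) (h : L ≤ R) (P : Set (Set ℕ))
    (hdyadic : ∀ I ∈ P, IsDyadic I) (hdisj : P.Pairwise Disjoint)
    (hcover : ⋃₀ P = Set.Ico L R) :
    (CompactRange L R).encard ≤ P.encard := by
  have key : ∀ C : Set ℕ, C ∈ CompactRange L R → ∃ I ∈ P, I ⊆ C := by
    rintro C ⟨hC, hsub, hmax⟩
    obtain ⟨x, hx⟩ := dyadic_nonempty hC
    have hxP : x ∈ ⋃₀ P := hcover ▸ hsub hx
    obtain ⟨I, hI, hxI⟩ := hxP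
    refine ⟨I, hI, ?_⟩
    rcases dyadic_nested_s3 (hdyadic I hI) hC hxI hx with h' | h'
    · exact h'
    · exact (hmax I (hdyadic I hI) (hcover ▸ Set.subset_sUnion_of_mem hI) h').symm.subset
  choose! f hfP hfC using key
  refine Set.encard_le_encard_of_injOn (f := f) hfP ?_
  intro C hC D hD hCD
  obtain ⟨x, hx⟩ := dyadic_nonempty (hdyadic _ (hfP C hC))
  have hxC := hfC C hC hx
  have hxD := hfC D hD (hCD ▸ hx)
  rcases dyadic_nested_s3 hC.1 hD.1 hxC hxD with h' | h'
  · exact hC.2.2 D hD.1 hD.2.1 h'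
  · exact (hD.2.2 C hC.1 hC.2.1 h').symm
end

section
/- Let L ≤ R be natural numbers and let P be a partition of [L,R) into aligned dyadic intervals such that no two members of P are siblings, i.e., P never contains both [2a·2^k, (2a+1)·2^k) and [(2a+1)·2^k, (2a+2)·2^k) for any a, k ∈ ℕ. Then P equals the compact range of [L,R). (Consequently, the Merge procedure, which repeatedly replaces sibling pairs by their parent until none remain, always produces the compact range of the combined interval.) -/
theorem dyadic_step (c k b j : ℕ)
    (hs : Set.Ico (c * 2 ^ k) ((c + 1) * 2 ^ k) ⊆ Set.Ico (b * 2 ^ j) ((b + 1) * 2 ^ j)) :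
    Set.Ico (c * 2 ^ k) ((c + 1) * 2 ^ k) = Set.Ico (b * 2 ^ j) ((b + 1) * 2 ^ j) ∨
    Set.Ico (c / 2 * 2 ^ (k + 1)) ((c / 2 + 1) * 2 ^ (k + 1)) ⊆
      Set.Ico (b * 2 ^ j) ((b + 1) * 2 ^ j) := by
  have hk : 0 < 2 ^ k := by positivity
  have hlt : c * 2 ^ k < (c + 1) * 2 ^ k := by nlinarith
  obtain ⟨h1, h2⟩ := (Set.Ico_subset_Ico_iff hlt).1 hs
  have hkj : k ≤ j := by
    have : 2 ^ k ≤ 2 ^ j := by nlinarith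
    exact (Nat.pow_le_pow_iff_right (by norm_num)).1 this
  rcases Nat.eq_or_lt_of_le hkj with rfl | hlt'
  · left
    have h3 : b ≤ c := Nat.le_of_mul_le_mul_right h1 hk
    have h4 : c + 1 ≤ b + 1 := Nat.le_of_mul_le_mul_right h2 hk
    have : b = c := by omega
    rw [this]
  · right
    obtain ⟨m, rfl⟩ := Nat.exists_eq_add_of_lt hlt'
    have e : 2 ^ (k + m + 1) = 2 ^ m * 2 * 2 ^ k := by ring
    rw [e] at h1 h2
    rw [← mul_assoc] at h1 h2
    have h3 := Nat.le_of_mul_le_mul_right h1 hk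
    have h4 := Nat.le_of_mul_le_mul_right h2 hk
    rw [← mul_assoc] at h3 h4
    have h5 : b * 2 ^ m ≤ c / 2 := by omega
    have h6 : c / 2 + 1 ≤ (b + 1) * 2 ^ m := by omega
    have e' : 2 ^ (k + m + 1) = 2 ^ m * 2 ^ (k + 1) := by ring
    apply Set.Ico_subset_Ico
    · rw [e', ← mul_assoc]; exact Nat.mul_le_mul_right _ h5
    · rw [e', ← mul_assoc]; exact Nat.mul_le_mul_right _ h6

/-- A partition of `[L, R)` into aligned dyadic intervals that contains no pair of
sibling intervals equals the compact range of `[L, R)`. -/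
theorem sibling_free_partition_eq_compactRange (L R : ℕ) (h : L ≤ R) (P : Set (Set ℕ))
    (hdyadic : ∀ I ∈ P, IsDyadic I) (hdisj : P.Pairwise Disjoint)
    (hcover : ⋃₀ P = Set.Ico L R)
    (hsib : ¬ ∃ a k : ℕ,
      Set.Ico (2 * a * 2 ^ k) ((2 * a + 1) * 2 ^ k) ∈ P ∧
      Set.Ico ((2 * a + 1) * 2 ^ k) ((2 * a + 2) * 2 ^ k) ∈ P) :
    P = CompactRange L R := by
  have key : ∀ k a : ℕ, Set.Ico (a * 2 ^ k) ((a + 1) * 2 ^ k) ⊆ Set.Ico L R →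
      ∃ I ∈ P, Set.Ico (a * 2 ^ k) ((a + 1) * 2 ^ k) ⊆ I := by
    intro k
    induction k with
    | zero =>
      intro a ha
      have : a ∈ ⋃₀ P := by
        rw [hcover]; apply ha; simp
      obtain ⟨I, hI, haI⟩ := this
      refine ⟨I, hI, fun x hx => ?_⟩
      simp only [pow_zero, mul_one, Set.mem_Ico] at hx
      have : x = a := by omega
      rwa [this]
    | succ k ih =>
      intro a ha
      have e1 : a * 2 ^ (k + 1) = 2 * a * 2 ^ k := by ring
      have e2 : (a + 1) * 2 ^ (k + 1) = (2 * a + 1 + 1) * 2 ^ k := by ring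
      have hle1 : 2 * a * 2 ^ k ≤ (2 * a + 1) * 2 ^ k := Nat.mul_le_mul_right _ (by omega)
      have hle2 : (2 * a + 1) * 2 ^ k ≤ (2 * a + 1 + 1) * 2 ^ k :=
        Nat.mul_le_mul_right _ (by omega)
      have s1 : Set.Ico (2 * a * 2 ^ k) ((2 * a + 1) * 2 ^ k) ⊆ Set.Ico L R :=
        (Set.Ico_subset_Ico (by omega) (by omega)).trans ha
      have s2 : Set.Ico ((2 * a + 1) * 2 ^ k) ((2 * a + 1 + 1) * 2 ^ k) ⊆ Set.Ico L R :=
        (Set.Ico_subset_Ico (by omega) (by omega)).trans ha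
      obtain ⟨I, hI, hsI⟩ := ih _ s1
      obtain ⟨J, hJ, hsJ⟩ := ih _ s2
      obtain ⟨b, j, rfl⟩ := hdyadic I hI
      obtain ⟨c, l, rfl⟩ := hdyadic J hJ
      rcases dyadic_step _ _ _ _ hsI with h1 | h1
      · rcases dyadic_step _ _ _ _ hsJ with h2 | h2
        · exact absurd ⟨a, k, h1 ▸ hI, h2 ▸ hJ⟩ hsib
        · refine ⟨_, hJ, ?_⟩
          rwa [show (2 * a + 1) / 2 = a by omega] at h2
      · refine ⟨_, hI, ?_⟩
        rwa [show (2 * a) / 2 = a by omega] at h1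
  have hsub : ∀ I ∈ P, I ⊆ Set.Ico L R := fun I hI => hcover ▸ Set.subset_sUnion_of_mem hI
  ext I
  constructor
  · intro hI
    refine ⟨hdyadic I hI, hsub I hI, ?_⟩
    rintro J ⟨a, k, rfl⟩ hJ hIJ
    obtain ⟨I', hI', hJI'⟩ := key k a hJ
    have : I = I' := by
      by_contra hne
      have hd := hdisj hI hI' hne
      obtain ⟨b, j, rfl⟩ := hdyadic I hI
      have hj : 0 < 2 ^ j := by positivity
      have hm : b * 2 ^ j ∈ Set.Ico (b * 2 ^ j) ((b + 1) * 2 ^ j) :=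
        ⟨le_refl _, by nlinarith⟩
      exact Set.disjoint_left.1 hd hm (hJI' (hIJ hm))
    subst this
    exact Set.Subset.antisymm hIJ hJI'
  · rintro ⟨⟨a, k, rfl⟩, hs, hmax⟩
    obtain ⟨I', hI', hII'⟩ := key k a hs
    rw [hmax I' (hdyadic I' hI') (hsub I' hI') hII']
    exact hI'
end
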